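/- Let Δ > 0, K ≥ 1, and let G be a finite set of real n₁×n₂ matrices such that ‖X - Y‖_max ≤ (K-1)Δ for all X, Y ∈ G. Let (i₁,j₁),…,(i_{m'},j_{m'}) be i.i.d. indices uniformly distributed on [n₁]×[n₂] and τ₁,…,τ_{m'} be i.i.d. uniform on [-Δ/2, Δ/2], independent of the indices. Then for every ε > 0, P( ∃ X, Y ∈ G : | (1/m') Σ_{k=1}^{m'} |Q_Δ(X_{i_k,j_k} + τ_k) - Q_Δ(Y_{i_k,j_k} + τ_k)| − (1/(n₁n₂)) ‖X - Y‖₁ | ≥ ε ) ≤ 2 |G|² exp( −2 ε² m' / (K² Δ²) ). -/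

import Mathlib

open MeasureTheory ProbabilityTheory

/-- The uniform quantizer `Q_Δ(t) = Δ(⌊t/Δ⌋ + 1/2)`. -/
noncomputable def uniformQuantizer (Δ : ℝ) (t : ℝ) : ℝ :=
  Δ * ((⌊t / Δ⌋ : ℤ) + 1 / 2)

/-- The uniform probability measure on the interval `[-Δ/2, Δ/2]`. -/
noncomputable def uniformDither (Δ : ℝ) : Measure ℝ :=
  (ENNReal.ofReal Δ)⁻¹ • volume.restrict (Set.Icc (-(Δ / 2)) (Δ / 2))

/-- The uniform probability measure on the finite index set `Fin n₁ × Fin n₂`. -/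
noncomputable def uniformIndex (n₁ n₂ : ℕ) : Measure (Fin n₁ × Fin n₂) :=
  ((n₁ * n₂ : ℕ) : ENNReal)⁻¹ • Measure.count

/-- The entrywise ℓ₁-norm of a real matrix. -/
noncomputable def matL1 {n₁ n₂ : ℕ} (X : Matrix (Fin n₁) (Fin n₂) ℝ) : ℝ :=
  ∑ i, ∑ j, |X i j|

lemma uq_mono {Δ : ℝ} (hΔ : 0 < Δ) : Monotone (uniformQuantizer Δ) := by
  intro a b hab
  unfold uniformQuantizer
  have : (⌊a / Δ⌋ : ℝ) ≤ ⌊b / Δ⌋ := by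
    exact_mod_cast Int.floor_mono (by gcongr)
  gcongr

lemma uq_measurable (Δ : ℝ) : Measurable (uniformQuantizer Δ) := by
  have h : Measurable (fun t : ℝ => ⌊t / Δ⌋) := (measurable_id.div_const Δ).floor
  have h2 : Measurable (fun t : ℝ => ((⌊t / Δ⌋ : ℤ) : ℝ)) := (measurable_from_top).comp h
  exact (h2.add_const _).const_mul Δ

lemma uq_intervalIntegrable {Δ : ℝ} (hΔ : 0 < Δ) (x a b : ℝ) :
    IntervalIntegrable (fun τ => uniformQuantizer Δ (x + τ)) volume a b := by
  apply Monotone.intervalIntegrable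
  intro s t hst
  exact uq_mono hΔ (by gcongr)

lemma uq_integral {Δ : ℝ} (hΔ : 0 < Δ) (x : ℝ) :
    ∫ τ in (-(Δ / 2))..(Δ / 2), uniformQuantizer Δ (x + τ) = Δ * x := by
  set g : ℝ → ℝ := fun t => t - uniformQuantizer Δ t with hg
  have hper : Function.Periodic g Δ := by
    intro t
    simp only [hg, uniformQuantizer]
    rw [add_div, div_self hΔ.ne', Int.floor_add_one]
    push_cast
    ring
  have h0 : ∫ t in (0 : ℝ)..(0 + Δ), g t = 0 := by
    have h1 : ∫ t in (0 : ℝ)..(0 + Δ), g t = ∫ t in (0 : ℝ)..(0 + Δ), (t - Δ / 2) := by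
      refine intervalIntegral.integral_congr_uIoo fun t ht => ?_
      rw [Set.uIoo_of_le (by linarith)] at ht
      have : ⌊t / Δ⌋ = 0 := by
        rw [Int.floor_eq_iff]
        constructor
        · simpa using div_nonneg ht.1.le hΔ.le
        · have := ht.2
          rw [div_lt_iff₀ hΔ]; push_cast; linarith
      simp only [hg, uniformQuantizer, this]
      push_cast
      ring
    rw [h1, intervalIntegral.integral_sub (by simp) (by simp)]
    simp
    ring
  have h2 : ∫ τ in (-(Δ / 2))..(Δ / 2), g (x + τ) = 0 := by
    rw [intervalIntegral.integral_comp_add_left]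
    have := hper.intervalIntegral_add_eq (x + -(Δ / 2)) 0
    rw [h0] at this
    rw [← this]
    congr 1
    ring
  have h3 : ∫ τ in (-(Δ / 2))..(Δ / 2), uniformQuantizer Δ (x + τ)
      = (∫ τ in (-(Δ / 2))..(Δ / 2), (x + τ)) - ∫ τ in (-(Δ / 2))..(Δ / 2), g (x + τ) := by
    have hi : IntervalIntegrable (fun τ => x + τ) volume (-(Δ / 2)) (Δ / 2) :=
      (continuous_const.add continuous_id).intervalIntegrable _ _
    rw [← intervalIntegral.integral_sub hi]
    · simp [hg]
    · exact hi.sub (uq_intervalIntegrable hΔ x _ _)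
  rw [h3, h2, intervalIntegral.integral_add (by simp) (by simp)]
  simp

lemma uq_abs_integral {Δ : ℝ} (hΔ : 0 < Δ) (x y : ℝ) :
    ∫ τ, |uniformQuantizer Δ (x + τ) - uniformQuantizer Δ (y + τ)| ∂(uniformDither Δ)
      = |x - y| := by
  wlog hxy : y ≤ x generalizing x y
  · rw [abs_sub_comm x y, ← this y x (le_of_not_ge hxy)]
    simp_rw [abs_sub_comm]
  unfold uniformDither
  rw [integral_smul_measure, integral_Icc_eq_integral_Ioc,
    ← intervalIntegral.integral_of_le (by linarith)]
  have : ∀ τ, |uniformQuantizer Δ (x + τ) - uniformQuantizer Δ (y + τ)|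
      = uniformQuantizer Δ (x + τ) - uniformQuantizer Δ (y + τ) := fun τ =>
    abs_of_nonneg (sub_nonneg.2 (uq_mono hΔ (by gcongr)))
  simp_rw [this]
  rw [intervalIntegral.integral_sub (uq_intervalIntegrable hΔ _ _ _)
    (uq_intervalIntegrable hΔ _ _ _), uq_integral hΔ, uq_integral hΔ,
    abs_of_nonneg (sub_nonneg.2 hxy), ENNReal.toReal_inv, ENNReal.toReal_ofReal hΔ.le,
    smul_eq_mul]
  field_simp

lemma uq_abs_le {Δ K : ℝ} (hΔ : 0 < Δ) {x y : ℝ} (h : |x - y| ≤ (K - 1) * Δ) (τ : ℝ) :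
    |uniformQuantizer Δ (x + τ) - uniformQuantizer Δ (y + τ)| ≤ K * Δ := by
  have e : uniformQuantizer Δ (x + τ) - uniformQuantizer Δ (y + τ)
      = (x - y) - Δ * Int.fract ((x + τ) / Δ) + Δ * Int.fract ((y + τ) / Δ) := by
    unfold uniformQuantizer Int.fract
    field_simp
    ring
  have a1 := Int.fract_nonneg ((x + τ) / Δ)
  have a2 := (Int.fract_lt_one ((x + τ) / Δ)).le
  have b1 := Int.fract_nonneg ((y + τ) / Δ)
  have b2 := (Int.fract_lt_one ((y + τ) / Δ)).le
  rw [abs_le] at h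
  rw [e, abs_le]
  constructor <;> nlinarith

lemma uniformDither_prob {Δ : ℝ} (hΔ : 0 < Δ) : IsProbabilityMeasure (uniformDither Δ) := by
  constructor
  simp only [uniformDither, Measure.smul_apply, Measure.restrict_apply_univ, Real.volume_Icc,
    smul_eq_mul]
  rw [show Δ / 2 - -(Δ / 2) = Δ by ring]
  exact ENNReal.inv_mul_cancel (by simpa using hΔ) (by simp)

lemma uniformIndex_prob {n₁ n₂ : ℕ} (hn₁ : 0 < n₁) (hn₂ : 0 < n₂) :
    IsProbabilityMeasure (uniformIndex n₁ n₂) := by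
  constructor
  simp only [uniformIndex, Measure.smul_apply, smul_eq_mul, Measure.count_univ]
  rw [ENat.card_eq_coe_fintype_card]
  simp only [Fintype.card_prod, Fintype.card_fin]
  exact ENNReal.inv_mul_cancel (by simp; omega) (by simp [ENNReal.mul_eq_top])

/-- the single-sample statistic -/
noncomputable def sampleStat {n₁ n₂ : ℕ} (Δ : ℝ) (X Y : Matrix (Fin n₁) (Fin n₂) ℝ)
    (w : (Fin n₁ × Fin n₂) × ℝ) : ℝ :=
  |uniformQuantizer Δ (X w.1.1 w.1.2 + w.2) - uniformQuantizer Δ (Y w.1.1 w.1.2 + w.2)|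

lemma sampleStat_measurable {n₁ n₂ : ℕ} (Δ : ℝ) (X Y : Matrix (Fin n₁) (Fin n₂) ℝ) :
    Measurable (sampleStat Δ X Y) := by
  have h : ∀ Z : Matrix (Fin n₁) (Fin n₂) ℝ, Measurable
      (fun w : (Fin n₁ × Fin n₂) × ℝ => uniformQuantizer Δ (Z w.1.1 w.1.2 + w.2)) := by
    intro Z
    refine (uq_measurable Δ).comp (Measurable.add ?_ measurable_snd)
    exact (measurable_of_finite (fun p : Fin n₁ × Fin n₂ => Z p.1 p.2)).comp measurable_fst
  exact ((h X).sub (h Y)).abs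

lemma sampleStat_integral {n₁ n₂ : ℕ} (hn₁ : 0 < n₁) (hn₂ : 0 < n₂) {Δ K : ℝ} (hΔ : 0 < Δ)
    (X Y : Matrix (Fin n₁) (Fin n₂) ℝ) (h : ∀ i j, |X i j - Y i j| ≤ (K - 1) * Δ) :
    ∫ w, sampleStat Δ X Y w ∂((uniformIndex n₁ n₂).prod (uniformDither Δ))
      = ((n₁ : ℝ) * n₂)⁻¹ * matL1 (X - Y) := by
  have := uniformDither_prob hΔ
  have := uniformIndex_prob hn₁ hn₂
  rw [integral_prod]
  · simp only [sampleStat, uq_abs_integral hΔ]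
    rw [uniformIndex, integral_smul_measure, integral_countable (by simp)]
    simp [tsum_fintype, Fintype.sum_prod_type, matL1, Measure.real]
  · refine Integrable.of_mem_Icc 0 (K * Δ) (sampleStat_measurable Δ X Y).aemeasurable ?_
    exact ae_of_all _ fun w => ⟨abs_nonneg _, uq_abs_le hΔ (h _ _) _⟩

lemma pair_bound {n₁ n₂ m' : ℕ}
    (hn₁ : 0 < n₁) (hn₂ : 0 < n₂)
    (Δ K : ℝ) (hΔ : 0 < Δ) (hK : 1 ≤ K)
    (X Y : Matrix (Fin n₁) (Fin n₂) ℝ) (h : ∀ i j, |X i j - Y i j| ≤ (K - 1) * Δ)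
    {Ω : Type*} [MeasurableSpace Ω] (P : Measure Ω) [IsProbabilityMeasure P]
    (W : Fin m' → Ω → (Fin n₁ × Fin n₂) × ℝ)
    (hmeas : ∀ k, Measurable (W k))
    (hindep : iIndepFun W P)
    (hdist : ∀ k, Measure.map (W k) P = (uniformIndex n₁ n₂).prod (uniformDither Δ))
    (ε : ℝ) (hε : 0 < ε) :
    P {ω | ε ≤ |(m' : ℝ)⁻¹ * (∑ k : Fin m', sampleStat Δ X Y (W k ω))
        - ((n₁ : ℝ) * n₂)⁻¹ * matL1 (X - Y)|}
      ≤ ENNReal.ofReal (2 * Real.exp (-(2 * ε ^ 2 * m') / (K ^ 2 * Δ ^ 2))) := by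
  rcases Nat.eq_zero_or_pos m' with rfl | hm
  · refine prob_le_one.trans ?_
    simp
  have hm' : (0 : ℝ) < m' := by exact_mod_cast hm
  set c := ((n₁ : ℝ) * n₂)⁻¹ * matL1 (X - Y) with hc
  have hmean : ∀ k, ∫ ω, sampleStat Δ X Y (W k ω) ∂P = c := by
    intro k
    rw [hc, ← sampleStat_integral hn₁ hn₂ hΔ X Y h, ← hdist k,
      integral_map (hmeas k).aemeasurable (sampleStat_measurable Δ X Y).aestronglyMeasurable]
  have hsub : ∀ k, HasSubgaussianMGF (fun ω => sampleStat Δ X Y (W k ω) - c)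
      ((‖K * Δ - 0‖₊ / 2) ^ 2) P := by
    intro k
    rw [← hmean k]
    refine hasSubgaussianMGF_of_mem_Icc
      ((sampleStat_measurable Δ X Y).comp (hmeas k)).aemeasurable ?_
    exact ae_of_all _ fun w => ⟨abs_nonneg _, uq_abs_le hΔ (h _ _) _⟩
  have hind : iIndepFun (fun k ω => sampleStat Δ X Y (W k ω) - c) P :=
    hindep.comp (fun _ w => sampleStat Δ X Y w - c)
      (fun _ => (sampleStat_measurable Δ X Y).sub_const c)
  have hsum := HasSubgaussianMGF.sum_of_iIndepFun hind (s := Finset.univ) (fun k _ => hsub k)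
  have hpos : 0 ≤ m' * ε := by positivity
  have t1 := hsum.measure_ge_le hpos
  have t2 := hsum.neg.measure_ge_le hpos
  have hexp : -(m' * ε) ^ 2 / (2 * ((∑ _k : Fin m', (‖K * Δ - 0‖₊ / 2) ^ 2 : NNReal) : ℝ))
      = -(2 * ε ^ 2 * m') / (K ^ 2 * Δ ^ 2) := by
    have : ‖K * Δ‖ = K * Δ := Real.norm_of_nonneg (by positivity)
    simp only [sub_zero, Finset.sum_const, Finset.card_univ, Fintype.card_fin, nsmul_eq_mul]
    push_cast
    rw [this]
    have : 0 < K := by linarith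
    field_simp
  rw [hexp] at t1 t2
  have hsubset : {ω | ε ≤ |(m' : ℝ)⁻¹ * (∑ k : Fin m', sampleStat Δ X Y (W k ω)) - c|} ⊆
      {ω | m' * ε ≤ ∑ k : Fin m', (sampleStat Δ X Y (W k ω) - c)} ∪
      {ω | m' * ε ≤ (-fun ω => ∑ k : Fin m', (sampleStat Δ X Y (W k ω) - c)) ω} := by
    intro ω hω
    simp only [Set.mem_ofPred_eq, Set.mem_union, Pi.neg_apply, Finset.sum_sub_distrib,
      Finset.sum_const, Finset.card_univ, Fintype.card_fin, nsmul_eq_mul] at hω ⊢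
    set S := ∑ k : Fin m', sampleStat Δ X Y (W k ω)
    have e : S - m' * c = m' * ((m' : ℝ)⁻¹ * S - c) := by field_simp
    rw [e]
    rcases le_abs.1 hω with h | h
    · left; gcongr
    · right; nlinarith
  refine (measure_mono hsubset).trans ((measure_union_le _ _).trans ?_)
  rw [two_mul, ENNReal.ofReal_add (by positivity) (by positivity)]
  refine add_le_add ?_ ?_
  · rw [← ofReal_measureReal]; exact ENNReal.ofReal_le_ofReal t1
  · rw [← ofReal_measureReal]; exact ENNReal.ofReal_le_ofReal t2

/-- Uniform (union-bound) concentration over a finite family `G` of matrices with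
pairwise `‖X - Y‖_max ≤ (K-1)Δ`: with i.i.d. uniform indices and i.i.d. uniform dithers
independent of the indices (encoded by the i.i.d. family `W k = ((i_k,j_k), τ_k)` with
product distribution), for every `ε > 0`,
`P(∃ X,Y ∈ G, |(1/m')Σ_k |Q_Δ(X+τ)-Q_Δ(Y+τ)| - ‖X-Y‖₁/(n₁n₂)| ≥ ε)
  ≤ 2|G|² exp(-2ε²m'/(K²Δ²))`. -/
theorem sampled_quantized_l1_concentration_finite_family {n₁ n₂ m' : ℕ}
    (hn₁ : 0 < n₁) (hn₂ : 0 < n₂)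
    (Δ K : ℝ) (hΔ : 0 < Δ) (hK : 1 ≤ K)
    (G : Finset (Matrix (Fin n₁) (Fin n₂) ℝ))
    (hmax : ∀ X ∈ G, ∀ Y ∈ G, ∀ i j, |X i j - Y i j| ≤ (K - 1) * Δ)
    {Ω : Type*} [MeasurableSpace Ω] (P : Measure Ω) [IsProbabilityMeasure P]
    (W : Fin m' → Ω → (Fin n₁ × Fin n₂) × ℝ)
    (hmeas : ∀ k, Measurable (W k))
    (hindep : iIndepFun W P)
    (hdist : ∀ k, Measure.map (W k) P = (uniformIndex n₁ n₂).prod (uniformDither Δ))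
    (ε : ℝ) (hε : 0 < ε) :
    P {ω | ∃ X ∈ G, ∃ Y ∈ G, ε ≤ |(m' : ℝ)⁻¹ * (∑ k : Fin m',
          |uniformQuantizer Δ (X (W k ω).1.1 (W k ω).1.2 + (W k ω).2)
            - uniformQuantizer Δ (Y (W k ω).1.1 (W k ω).1.2 + (W k ω).2)|)
        - ((n₁ : ℝ) * n₂)⁻¹ * matL1 (X - Y)|}
      ≤ ENNReal.ofReal (2 * (G.card : ℝ) ^ 2
          * Real.exp (-(2 * ε ^ 2 * m') / (K ^ 2 * Δ ^ 2))) := by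
  set B := Real.exp (-(2 * ε ^ 2 * m') / (K ^ 2 * Δ ^ 2)) with hB
  have hsubset : {ω | ∃ X ∈ G, ∃ Y ∈ G, ε ≤ |(m' : ℝ)⁻¹ * (∑ k : Fin m',
          |uniformQuantizer Δ (X (W k ω).1.1 (W k ω).1.2 + (W k ω).2)
            - uniformQuantizer Δ (Y (W k ω).1.1 (W k ω).1.2 + (W k ω).2)|)
        - ((n₁ : ℝ) * n₂)⁻¹ * matL1 (X - Y)|} ⊆
      ⋃ p ∈ G ×ˢ G, {ω | ε ≤ |(m' : ℝ)⁻¹ * (∑ k : Fin m', sampleStat Δ p.1 p.2 (W k ω))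
        - ((n₁ : ℝ) * n₂)⁻¹ * matL1 (p.1 - p.2)|} := by
    rintro ω ⟨X, hX, Y, hY, h⟩
    simp only [Set.mem_iUnion]
    exact ⟨(X, Y), Finset.mem_product.2 ⟨hX, hY⟩, h⟩
  refine (measure_mono hsubset).trans ((measure_biUnion_finset_le _ _).trans ?_)
  refine (Finset.sum_le_sum (g := fun _ => ENNReal.ofReal (2 * B)) fun p hp => ?_).trans ?_
  · obtain ⟨h1, h2⟩ := Finset.mem_product.1 hp
    exact pair_bound hn₁ hn₂ Δ K hΔ hK p.1 p.2 (hmax _ h1 _ h2) P W hmeas hindep hdist ε hε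
  · rw [Finset.sum_const, ← ENNReal.ofReal_nsmul, Finset.card_product, nsmul_eq_mul]
    apply ENNReal.ofReal_le_ofReal
    push_cast
    apply le_of_eq
    ring
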